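/- Let q* be the optimal action-value function of a finite MDP with state space S, action space A, reward r, transition p, and discount γ ∈ [0,1) (i.e., the unique fixed point of the Bellman optimality operator T*). Fix a behavior policy π such that the induced chain on S × A is irreducible and aperiodic, with stationary state-action weights d_π(s)π(a|s) > 0, and define the weighted Bellman optimality operator (T*' q)(s,a) = d_π(s)π(a|s)·[(T* q)(s,a) − q(s,a)] + q(s,a). Then T*' is a pseudo-contraction toward q* in the supremum norm: there exists γ' ∈ [0,1) such that for all q ∈ ℝ^{S×A}, ‖T*' q − q*‖_∞ ≤ γ'·‖q − q*‖_∞. -/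

import Mathlib

/-!
A stationary distribution `d` of an irreducible chain is strictly positive: some `d y₀` is
positive, and `d y ≥ d y₀ * (P ^ n) y₀ y > 0` for a suitable `n` (`stationary_pos`). The Bellman
optimality operator is a `γ`-contraction in the supremum norm (`bellmanOpt_sub_le`). At each `y`,
the weighted operator is the convex combination, with weights `d y` and `1 - d y`, of the Bellman
operator and the identity, so the error at `y` is at most `1 - d y * (1 - γ)` times the sup-norm
error. Taking the smallest weight `m > 0`, the factor `1 - m * (1 - γ)` works uniformly.
-/

open Finset Matrix

/-- The set of return times of state `i` under the stochastic matrix `P`. -/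
def returnTimes {Y : Type*} [Fintype Y] [DecidableEq Y] (P : Matrix Y Y ℝ) (i : Y) : Set ℕ :=
  {n | 1 ≤ n ∧ 0 < (P ^ n) i i}

variable {S A : Type*} [Fintype S] [Fintype A] [Nonempty S] [Nonempty A]

/-- The Bellman optimality operator of a finite MDP. -/
noncomputable def bellmanOpt (r : S × A → ℝ) (p : S × A → S → ℝ) (γ : ℝ)
    (q : S × A → ℝ) : S × A → ℝ :=
  fun y => r y + γ * ∑ s', p y s' * ⨆ a', q (s', a')

/-- The weighted Bellman optimality operator with state-action weights `d`. -/
noncomputable def weightedBellmanOpt (r : S × A → ℝ) (p : S × A → S → ℝ) (γ : ℝ)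
    (d : S × A → ℝ) (q : S × A → ℝ) : S × A → ℝ :=
  fun y => d y * (bellmanOpt r p γ q y - q y) + q y

/-- A stationary distribution of an irreducible nonnegative matrix is strictly positive. -/
lemma stationary_pos {Y : Type*} [Fintype Y] [DecidableEq Y] (P : Matrix Y Y ℝ)
    (hP : ∀ i j, 0 ≤ P i j) (hirr : ∀ i j, ∃ n : ℕ, 0 < (P ^ n) i j)
    (d : Y → ℝ) (hd : ∀ y, 0 ≤ d y) (hsum : ∑ y, d y = 1)
    (hstat : ∀ y', ∑ y, d y * P y y' = d y') (y : Y) : 0 < d y := by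
  have hpow : ∀ n : ℕ, d ᵥ* (P ^ n) = d := by
    intro n
    induction n with
    | zero => simp
    | succ n ih =>
      rw [pow_succ, ← Matrix.vecMul_vecMul, ih]
      funext y'
      exact hstat y'
  have hnn : ∀ (n : ℕ) (i j : Y), 0 ≤ (P ^ n) i j := by
    intro n
    induction n with
    | zero =>
      intro i j
      rw [pow_zero, Matrix.one_apply]
      split_ifs <;> norm_num
    | succ n ih =>
      intro i j
      rw [pow_succ, Matrix.mul_apply]
      exact Finset.sum_nonneg fun k _ => mul_nonneg (ih i k) (hP k j)
  obtain ⟨y₀, -, hy₀⟩ : ∃ y₀ ∈ Finset.univ, 0 < d y₀ :=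
    Finset.exists_lt_of_sum_lt (f := fun _ : Y => (0 : ℝ)) (by simp [hsum])
  obtain ⟨n, hn⟩ := hirr y₀ y
  calc 0 < d y₀ * (P ^ n) y₀ y := mul_pos hy₀ hn
    _ ≤ ∑ i, d i * (P ^ n) i y :=
        Finset.single_le_sum (f := fun i => d i * (P ^ n) i y)
          (fun i _ => mul_nonneg (hd i) (hnn n i y)) (Finset.mem_univ y₀)
    _ = d y := congrFun (hpow n) y

/-- The maximum over a finite type is monotone and commutes with adding a constant, hence it is
1-Lipschitz for the supremum norm. -/
lemma abs_ciSup_sub_ciSup_le {B : Type*} [Finite B] [Nonempty B] (f g : B → ℝ) (N : ℝ)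
    (h : ∀ b, |f b - g b| ≤ N) : |(⨆ b, f b) - ⨆ b, g b| ≤ N := by
  rw [abs_le]
  constructor
  · have : (⨆ b, g b) ≤ (⨆ b, f b) + N := ciSup_le fun b => by
      have h1 := (abs_le.1 (h b)).1
      have h2 := le_ciSup (Set.finite_range f).bddAbove b
      linarith
    linarith
  · have : (⨆ b, f b) ≤ (⨆ b, g b) + N := ciSup_le fun b => by
      have h1 := (abs_le.1 (h b)).2
      have h2 := le_ciSup (Set.finite_range g).bddAbove b
      linarith
    linarith

/-- The Bellman optimality operator is a `γ`-contraction in the supremum norm. -/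
lemma bellmanOpt_sub_le {S A : Type*} [Fintype S] [Fintype A] [Nonempty A]
    (r : S × A → ℝ) (p : S × A → S → ℝ)
    (hpnonneg : ∀ y s', 0 ≤ p y s') (hpsum : ∀ y, ∑ s', p y s' = 1)
    (γ : ℝ) (hγ0 : 0 ≤ γ) (q q' : S × A → ℝ) (N : ℝ) (h : ∀ y, |q y - q' y| ≤ N) (y : S × A) :
    |bellmanOpt r p γ q y - bellmanOpt r p γ q' y| ≤ γ * N := by
  have heq : bellmanOpt r p γ q y - bellmanOpt r p γ q' y =
      γ * ∑ s', p y s' * ((⨆ a', q (s', a')) - ⨆ a', q' (s', a')) := by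
    simp only [bellmanOpt, mul_sub, Finset.sum_sub_distrib]
    ring
  rw [heq, abs_mul, abs_of_nonneg hγ0]
  refine mul_le_mul_of_nonneg_left ?_ hγ0
  calc |∑ s', p y s' * ((⨆ a', q (s', a')) - ⨆ a', q' (s', a'))|
      ≤ ∑ s', |p y s' * ((⨆ a', q (s', a')) - ⨆ a', q' (s', a'))| :=
        Finset.abs_sum_le_sum_abs _ _
    _ ≤ ∑ s', p y s' * N := Finset.sum_le_sum fun s' _ => by
        rw [abs_mul, abs_of_nonneg (hpnonneg y s')]
        exact mul_le_mul_of_nonneg_left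
          (abs_ciSup_sub_ciSup_le _ _ N fun a => h (s', a)) (hpnonneg y s')
    _ = N := by rw [← Finset.sum_mul, hpsum, one_mul]

/-- The weighted Bellman optimality operator is a pseudo-contraction towards the
optimal action-value function `q*` in the supremum norm, when the weights are the
stationary distribution of the irreducible aperiodic chain on `S × A` induced by a
fixed behavior policy `π`. -/
theorem weighted_bellman_pseudo_contraction
    [DecidableEq S] [DecidableEq A]
    (r : S × A → ℝ) (p : S × A → S → ℝ)
    (hpnonneg : ∀ y s', 0 ≤ p y s') (hpsum : ∀ y, ∑ s', p y s' = 1)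
    (γ : ℝ) (hγ0 : 0 ≤ γ) (hγ1 : γ < 1)
    (qstar : S × A → ℝ) (hqstar : bellmanOpt r p γ qstar = qstar)
    (π : S → A → ℝ) (hπnonneg : ∀ s a, 0 ≤ π s a) (hπsum : ∀ s, ∑ a, π s a = 1)
    -- the Markov chain on S × A induced by π
    (Pind : Matrix (S × A) (S × A) ℝ)
    (hPind : Pind = fun y y' => p y y'.1 * π y'.1 y'.2)
    (hirr : ∀ y y', ∃ n : ℕ, 0 < (Pind ^ n) y y')
    (haper : ∀ y, ∀ e : ℕ, (∀ n ∈ returnTimes Pind y, e ∣ n) → e = 1)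
    -- the stationary state-action weights
    (d : S × A → ℝ) (hdnonneg : ∀ y, 0 ≤ d y) (hdsum : ∑ y, d y = 1)
    (hdstat : ∀ y', ∑ y, d y * Pind y y' = d y') :
    ∃ γ' : ℝ, 0 ≤ γ' ∧ γ' < 1 ∧ ∀ q : S × A → ℝ,
      (⨆ y : S × A, |weightedBellmanOpt r p γ d q y - qstar y|) ≤
        γ' * ⨆ y : S × A, |q y - qstar y| := by
  have hPnn : ∀ i j, 0 ≤ Pind i j := by
    intro i j
    rw [hPind]
    exact mul_nonneg (hpnonneg _ _) (hπnonneg _ _)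
  have hdpos := stationary_pos Pind hPnn hirr d hdnonneg hdsum hdstat
  have hd1 : ∀ y, d y ≤ 1 := fun y => by
    rw [← hdsum]
    exact Finset.single_le_sum (fun i _ => hdnonneg i) (Finset.mem_univ y)
  obtain ⟨y₀, hy₀⟩ := Finite.exists_min d
  refine ⟨1 - d y₀ * (1 - γ), ?_, ?_, ?_⟩
  · nlinarith [hd1 y₀, hdpos y₀]
  · nlinarith [hdpos y₀]
  intro q
  set N := ⨆ y : S × A, |q y - qstar y| with hN
  have hle : ∀ y, |q y - qstar y| ≤ N := fun y =>
    le_ciSup (f := fun y => |q y - qstar y|) (Set.finite_range _).bddAbove y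
  have hN0 : 0 ≤ N := (abs_nonneg _).trans (hle y₀)
  refine ciSup_le fun y => ?_
  have hT := bellmanOpt_sub_le r p hpnonneg hpsum γ hγ0 q qstar N hle y
  rw [hqstar] at hT
  have heq : weightedBellmanOpt r p γ d q y - qstar y =
      d y * (bellmanOpt r p γ q y - qstar y) + (1 - d y) * (q y - qstar y) := by
    simp only [weightedBellmanOpt]
    ring
  have h1d : 0 ≤ 1 - d y := sub_nonneg.2 (hd1 y)
  calc |weightedBellmanOpt r p γ d q y - qstar y|
      ≤ |d y * (bellmanOpt r p γ q y - qstar y)| + |(1 - d y) * (q y - qstar y)| := by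
        rw [heq]
        exact abs_add_le _ _
    _ ≤ d y * (γ * N) + (1 - d y) * N := by
        rw [abs_mul, abs_mul, abs_of_nonneg (hdnonneg y), abs_of_nonneg h1d]
        exact add_le_add (mul_le_mul_of_nonneg_left hT (hdnonneg y))
          (mul_le_mul_of_nonneg_left (hle y) h1d)
    _ = (1 - d y * (1 - γ)) * N := by ring
    _ ≤ (1 - d y₀ * (1 - γ)) * N := by
        refine mul_le_mul_of_nonneg_right ?_ hN0
        have := mul_le_mul_of_nonneg_right (hy₀ y) (sub_nonneg.2 hγ1.le)
        linarith
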